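/- There exists a state h₀ on 𝒯 that vanishes on every compact operator belonging to 𝒯 and satisfies h₀(T_{n,m}) = 1 if n = m and h₀(T_{n,m}) = 0 if n ≠ m, for all n, m ∈ ℕ; equivalently, h₀(T_{n,m}) = ∫_{S¹} z^{m−n} dμ(z) where μ is the normalized Haar (arc-length) probability measure on the unit circle S¹. -/

import Mathlib

/-- `T_{n,m} = Tⁿ (T*)ᵐ` for a bounded operator `T` on a complex Hilbert space. -/
noncomputable def Tnm {H : Type*} [NormedAddCommGroup H] [InnerProductSpace ℂ H]
    [CompleteSpace H] (T : H →L[ℂ] H) (n m : ℕ) : H →L[ℂ] H :=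
  T ^ n * (ContinuousLinearMap.adjoint T) ^ m

/-- The Toeplitz algebra: the norm-closed star-subalgebra of `B(H)` generated by `T`. -/
noncomputable def ToeplitzAlg {H : Type*} [NormedAddCommGroup H] [InnerProductSpace ℂ H]
    [CompleteSpace H] (T : H →L[ℂ] H) : StarSubalgebra ℂ (H →L[ℂ] H) :=
  StarAlgebra.elemental ℂ T

/-- The `k`-th Fourier coefficient `A_k = (1/2π) ∫₀^{2π} e^{-ikθ} U_θ A U_θ* dθ`
(a Bochner integral in `B(H)`). -/
noncomputable def opFourierCoeff {H : Type*} [NormedAddCommGroup H] [InnerProductSpace ℂ H]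
    [CompleteSpace H] (U : ℝ → H →L[ℂ] H) (A : H →L[ℂ] H) (k : ℤ) : H →L[ℂ] H :=
  (2 * Real.pi)⁻¹ • ∫ θ in (0 : ℝ)..(2 * Real.pi),
    Complex.exp (-(k : ℂ) * θ * Complex.I) • (U θ * A * ContinuousLinearMap.adjoint (U θ))

open ComplexOrder MeasureTheory

/-- The Borel σ-algebra on the unit circle. -/
noncomputable instance : MeasurableSpace Circle := borel Circle

instance : BorelSpace Circle := ⟨rfl⟩

/-- The normalized Haar (arc-length) probability measure on the unit circle. -/
noncomputable def circleHaar : Measure Circle :=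
  Measure.haarMeasure (⊤ : TopologicalSpace.PositiveCompacts Circle)

/-!
Let `φ` be a limit, along an ultrafilter finer than `atTop`, of the vector states
`A ↦ ⟪e k, A (e k)⟫`. It is a state on all of `B(H)`. An orthonormal sequence converges weakly to
zero and a compact operator maps the unit ball into a compact set, so `φ` kills the compact
operators. Since `T* T = 1`, one has `T_{n,m} e_k = e_{k - m + n}` as soon as `m ≤ k`, so the `k`-th
diagonal entry of `T_{n,m}` is eventually `δ_{n,m}`.
-/

open Filter Topology

section Functionals

theorem exists_tendsto_of_norm_le {𝕜 F ι : Type*} [NontriviallyNormedField 𝕜] [ProperSpace 𝕜]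
    [SeminormedAddCommGroup F] [NormedSpace 𝕜 F] (U : Ultrafilter ι) {f : ι → StrongDual 𝕜 F}
    {C : ℝ} (hf : ∀ i, ‖f i‖ ≤ C) :
    ∃ φ : StrongDual 𝕜 F, ∀ a, Tendsto (fun i ↦ f i a) U (𝓝 (φ a)) := by
  obtain ⟨φ, -, hφ⟩ := (WeakDual.isCompact_closedBall (0 : StrongDual 𝕜 F) C).ultrafilter_le_nhds'
    (U.map fun i ↦ StrongDual.toWeakDual (f i))
    (Ultrafilter.mem_map.2 (Eventually.of_forall fun i ↦ by simpa using hf i))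
  exact ⟨WeakDual.toStrongDual φ,
    tendsto_iff_forall_eval_tendsto_topDualPairing.1 hφ⟩

variable {𝕜 E ι : Type*} [RCLike 𝕜] [NormedAddCommGroup E] [InnerProductSpace 𝕜 E]

/-- The functional `A ↦ ⟪x, A x⟫` on the bounded operators; for a unit vector `x` this is the
vector state of `x`. -/
noncomputable def vectorFunctional (x : E) : StrongDual 𝕜 (E →L[𝕜] E) :=
  innerSL 𝕜 x ∘L ContinuousLinearMap.apply 𝕜 E x

@[simp]
theorem vectorFunctional_apply (x : E) (A : E →L[𝕜] E) :
    vectorFunctional x A = inner 𝕜 x (A x) :=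
  rfl

theorem norm_vectorFunctional_le (x : E) : ‖vectorFunctional (𝕜 := 𝕜) x‖ ≤ ‖x‖ ^ 2 := by
  refine ContinuousLinearMap.opNorm_le_bound _ (sq_nonneg _) fun A ↦ ?_
  calc ‖inner 𝕜 x (A x)‖ ≤ ‖x‖ * ‖A x‖ := norm_inner_le_norm _ _
    _ ≤ ‖x‖ * (‖A‖ * ‖x‖) := by gcongr; exact A.le_opNorm x
    _ = ‖x‖ ^ 2 * ‖A‖ := by ring

theorem exists_nonneg_forall_tendsto_vectorFunctional_eq (l : Filter ι) [l.NeBot] {x : ι → E}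
    {C : ℝ} (hx : ∀ i, ‖x i‖ ≤ C) :
    ∃ φ : StrongDual 𝕜 (E →L[𝕜] E), (∀ A : E →L[𝕜] E, A.IsPositive → 0 ≤ φ A) ∧
      ∀ A c, Tendsto (fun i ↦ vectorFunctional (x i) A) l (𝓝 c) → φ A = c := by
  have hbound : ∀ i, ‖vectorFunctional (𝕜 := 𝕜) (x i)‖ ≤ C ^ 2 := fun i ↦
    (norm_vectorFunctional_le (x i)).trans (by gcongr; exact hx i)
  obtain ⟨φ, hφ⟩ := exists_tendsto_of_norm_le (Ultrafilter.of l) hbound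
  exact ⟨φ, fun A hA ↦ ge_of_tendsto' (hφ A) fun i ↦ hA.inner_nonneg_right (x i),
    fun A c hc ↦ tendsto_nhds_unique (hφ A) (hc.mono_left (Ultrafilter.of_le l))⟩

theorem tendsto_vectorFunctional_zero_of_isCompactOperator {l : Filter ι} {x : ι → E} {C : ℝ}
    (hx : ∀ i, ‖x i‖ ≤ C) (hweak : ∀ y, Tendsto (fun i ↦ inner 𝕜 (x i) y) l (𝓝 0))
    {A : E →L[𝕜] E} (hA : IsCompactOperator A) :
    Tendsto (fun i ↦ vectorFunctional (x i) A) l (𝓝 0) := by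
  refine (tendsto_iff_ultrafilter _ _ _).2 fun U hU ↦ ?_
  obtain ⟨y, -, hy⟩ := (hA.isCompact_closure_image_closedBall (f := A.toLinearMap) C)
    |>.ultrafilter_le_nhds' (U.map fun i ↦ A (x i)) (Ultrafilter.mem_map.2
      (Eventually.of_forall fun i ↦ subset_closure ⟨x i, by simpa using hx i, rfl⟩))
  have hdiff : Tendsto (fun i ↦ inner 𝕜 (x i) (A (x i) - y)) U (𝓝 0) := by
    have hnorm : Tendsto (fun i ↦ C * ‖A (x i) - y‖) U (𝓝 0) := by
      simpa using (tendsto_iff_norm_sub_tendsto_zero.1 hy).const_mul C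
    exact squeeze_zero_norm (fun i ↦ (norm_inner_le_norm _ _).trans (by gcongr; exact hx i)) hnorm
  simpa [inner_sub_right] using hdiff.add ((hweak y).mono_left hU)

theorem tendsto_inner_cofinite_zero_of_orthonormal {x : ι → E} (hx : Orthonormal 𝕜 x) (y : E) :
    Tendsto (fun i ↦ inner 𝕜 (x i) y) cofinite (𝓝 0) := by
  rw [tendsto_zero_iff_norm_tendsto_zero]
  simpa using (hx.inner_products_summable y).tendsto_cofinite_zero.sqrt

end Functionals

section Isometries

theorem adjoint_comp_self_eq_one_of_orthonormal {𝕜 E F ι : Type*} [RCLike 𝕜]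
    [NormedAddCommGroup E] [InnerProductSpace 𝕜 E] [CompleteSpace E]
    [NormedAddCommGroup F] [InnerProductSpace 𝕜 F] [CompleteSpace F]
    (b : HilbertBasis ι 𝕜 E) {T : E →L[𝕜] F} (hT : Orthonormal 𝕜 fun i ↦ T (b i)) :
    ContinuousLinearMap.adjoint T ∘L T = 1 := by
  classical
  refine ContinuousLinearMap.ext_on
    (Submodule.dense_iff_topologicalClosure_eq_top.2 b.dense_span) ?_
  rintro _ ⟨i, rfl⟩
  refine b.repr.injective (lp.ext (funext fun j ↦ ?_))
  simp [b.repr_apply_apply, ContinuousLinearMap.adjoint_inner_right,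
    orthonormal_iff_ite.1 hT, orthonormal_iff_ite.1 b.orthonormal]

theorem adjoint_comp_self_eq_one_of_shift {𝕜 E : Type*} [RCLike 𝕜] [NormedAddCommGroup E]
    [InnerProductSpace 𝕜 E] [CompleteSpace E] (b : HilbertBasis ℕ 𝕜 E) {T : E →L[𝕜] E}
    (hT : ∀ n, T (b n) = b (n + 1)) : ContinuousLinearMap.adjoint T ∘L T = 1 := by
  refine adjoint_comp_self_eq_one_of_orthonormal b ?_
  simp only [hT]
  exact b.orthonormal.comp (· + 1) (add_left_injective 1)

theorem pow_apply_of_shift {R M : Type*} [Semiring R] [AddCommMonoid M] [Module R M]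
    [TopologicalSpace M] {x : ℕ → M} {T : M →L[R] M} (hT : ∀ n, T (x n) = x (n + 1)) (n k : ℕ) :
    (T ^ n) (x k) = x (k + n) := by
  induction n with
  | zero => simp
  | succ n ih => rw [pow_succ', mul_apply_eq_comp, ih, hT, add_assoc]

variable {H : Type*} [NormedAddCommGroup H] [InnerProductSpace ℂ H] [CompleteSpace H]
  {e : ℕ → H} {T : H →L[ℂ] H}

theorem Tnm_apply_of_shift (hiso : ContinuousLinearMap.adjoint T ∘L T = 1)
    (hT : ∀ n, T (e n) = e (n + 1)) (n m k : ℕ) : Tnm T n m (e (k + m)) = e (k + n) := by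
  have hcancel : ContinuousLinearMap.adjoint T ^ m * T ^ m = 1 := pow_mul_pow_eq_one m hiso
  calc Tnm T n m (e (k + m))
      = (T ^ n * (ContinuousLinearMap.adjoint T ^ m * T ^ m)) (e k) := by
        rw [← pow_apply_of_shift hT m k]; rfl
    _ = e (k + n) := by rw [hcancel, mul_one, pow_apply_of_shift hT]

theorem tendsto_vectorFunctional_Tnm (he : Orthonormal ℂ e)
    (hiso : ContinuousLinearMap.adjoint T ∘L T = 1) (hT : ∀ n, T (e n) = e (n + 1)) (n m : ℕ) :
    Tendsto (fun k ↦ vectorFunctional (e k) (Tnm T n m)) atTop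
      (𝓝 (if n = m then 1 else 0)) := by
  rw [← tendsto_add_atTop_iff_nat m]
  refine tendsto_const_nhds.congr fun k ↦ ?_
  rw [vectorFunctional_apply, Tnm_apply_of_shift hiso hT, orthonormal_iff_ite.1 he]
  simp [eq_comm]

end Isometries

section Circle

instance isProbabilityMeasure_circleHaar : IsProbabilityMeasure circleHaar :=
  ⟨Measure.haarMeasure_self (K₀ := (⊤ : TopologicalSpace.PositiveCompacts Circle))⟩

instance isMulLeftInvariant_circleHaar : circleHaar.IsMulLeftInvariant :=
  Measure.isMulLeftInvariant_haarMeasure _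

theorem integral_zpow_circleHaar (j : ℤ) :
    ∫ z : Circle, (z : ℂ) ^ j ∂circleHaar = if j = 0 then 1 else 0 := by
  split_ifs with hj
  · simp [hj]
  · have hroot : (Circle.exp (Real.pi / j) : ℂ) ^ j = -1 := by
      have hj' : (j : ℂ) ≠ 0 := Int.cast_ne_zero.2 hj
      rw [Circle.coe_exp, ← Complex.exp_int_mul, ← Complex.exp_pi_mul_I]
      congr 1
      push_cast
      field_simp
    exact integral_eq_zero_of_mul_left_eq_neg (g := Circle.exp (Real.pi / j)) fun z ↦ by
      rw [Circle.coe_mul, mul_zpow, hroot, neg_one_mul]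

end Circle

theorem exists_haar_state_on_quotient_general {H : Type*} [NormedAddCommGroup H]
    [InnerProductSpace ℂ H] [CompleteSpace H] {e : ℕ → H} (he : Orthonormal ℂ e) {T : H →L[ℂ] H}
    (hiso : ContinuousLinearMap.adjoint T ∘L T = 1) (hT : ∀ n, T (e n) = e (n + 1)) :
    ∃ φ : (H →L[ℂ] H) →L[ℂ] ℂ,
      (∀ A, 0 ≤ φ (star A * A)) ∧ φ 1 = 1 ∧
      (∀ A : H →L[ℂ] H, IsCompactOperator A → φ A = 0) ∧
      (∀ n m, φ (Tnm T n m) = if n = m then (1 : ℂ) else 0) ∧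
      ∀ n m, φ (Tnm T n m) = ∫ z : Circle, (z : ℂ) ^ ((m : ℤ) - (n : ℤ)) ∂circleHaar := by
  have hnorm : ∀ k, ‖e k‖ ≤ 1 := fun k ↦ (he.norm_eq_one k).le
  have hweak : ∀ y, Tendsto (fun k ↦ inner ℂ (e k) y) atTop (𝓝 0) := fun y ↦
    Nat.cofinite_eq_atTop ▸ tendsto_inner_cofinite_zero_of_orthonormal he y
  obtain ⟨φ, hpos, hlim⟩ :=
    exists_nonneg_forall_tendsto_vectorFunctional_eq (𝕜 := ℂ) atTop hnorm
  have hTnm : ∀ n m, φ (Tnm T n m) = if n = m then (1 : ℂ) else 0 := fun n m ↦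
    hlim _ _ (tendsto_vectorFunctional_Tnm he hiso hT n m)
  refine ⟨φ, fun A ↦ hpos _ A.isPositive_adjoint_comp_self, ?_, fun A hA ↦ ?_, hTnm,
    fun n m ↦ ?_⟩
  · simpa [Tnm] using hTnm 0 0
  · exact hlim A 0 (tendsto_vectorFunctional_zero_of_isCompactOperator hnorm hweak hA)
  · rw [hTnm, integral_zpow_circleHaar]
    simp [sub_eq_zero, eq_comm]

/-- there is a state `h₀` on `𝒯` vanishing on compact operators in `𝒯` with
`h₀(T_{n,m}) = δ_{n,m}`; equivalently `h₀(T_{n,m}) = ∫_{S¹} z^{m-n} dμ` for the normalized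
Haar measure `μ` on the circle. -/
theorem exists_haar_state_on_quotient {H : Type*} [NormedAddCommGroup H]
    [InnerProductSpace ℂ H] [CompleteSpace H] (e : HilbertBasis ℕ ℂ H) (T : H →L[ℂ] H)
    (hT : ∀ n : ℕ, T (e n) = e (n + 1)) :
    ∃ h₀ : (ToeplitzAlg T) →L[ℂ] ℂ,
      (∀ a : ToeplitzAlg T, 0 ≤ h₀ (star a * a)) ∧ h₀ 1 = 1 ∧
      (∀ a : ToeplitzAlg T, IsCompactOperator (⇑(a : H →L[ℂ] H)) → h₀ a = 0) ∧
      (∀ (n m : ℕ) (hnm : Tnm T n m ∈ ToeplitzAlg T),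
        h₀ ⟨Tnm T n m, hnm⟩ = if n = m then (1 : ℂ) else 0) ∧
      (∀ (n m : ℕ) (hnm : Tnm T n m ∈ ToeplitzAlg T),
        h₀ ⟨Tnm T n m, hnm⟩ =
          ∫ z : Circle, ((z : ℂ) ^ ((m : ℤ) - (n : ℤ))) ∂circleHaar) := by
  obtain ⟨φ, hpos, hone, hcompact, hTnm, hint⟩ := exists_haar_state_on_quotient_general
    e.orthonormal (adjoint_comp_self_eq_one_of_shift e hT) hT
  exact ⟨φ ∘L (ToeplitzAlg T).toSubalgebra.toSubmodule.subtypeL, fun a ↦ hpos a, hone,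
    fun a ↦ hcompact a, fun n m _ ↦ hTnm n m, fun n m _ ↦ hint n m⟩
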